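/- Let (g,[p]) be a restricted Lie algebra over k and j ∈ {1,…,p−1}. Suppose M is a U₀(g)-module with the equal j-images property. If g contains a non-abelian p-trivial subalgebra (a subalgebra u with [u,u] ≠ 0 on which the p-map vanishes identically), then rk^j(M) = 0, i.e., x_M^j = 0 for all x ∈ V(g). -/

import Mathlib

noncomputable section

namespace ElemAb

variable (p : ℕ) (k : Type) [Field k]

/-- The algebra of polynomial functions on a `k`-vector space `V`: the subalgebra of
`V → k` generated by the linear functionals. -/
def polyFuns (V : Type) [AddCommGroup V] [Module k V] : Subalgebra k (V → k) :=
  Algebra.adjoin k {f : V → k | ∃ φ : V →ₗ[k] k, f = ⇑φ}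

/-- The Zariski topology on a `k`-vector space: the topology generated by the complements of
zero sets of polynomial functions. -/
def zar (V : Type) [AddCommGroup V] [Module k V] : TopologicalSpace V :=
  TopologicalSpace.generateFrom {U | ∃ f ∈ polyFuns k V, U = {x | f x ≠ 0}}

variable (L : Type) [LieRing L] [LieAlgebra k L]

/-- A restricted Lie algebra structure (`p`-map) on the Lie algebra `L`:  a map
`x ↦ x^[p]` having the formal properties of a `p`-th power map, namely
`(t • x)^[p] = t^p • x^[p]`, additivity on commuting elements (and, in general, additivity up
to a correction term lying in the subalgebra generated by the two elements), and
`ad (x^[p]) = (ad x)^p`. -/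
structure pStructure : Type where
  pmap : L → L
  pmap_smul : ∀ (t : k) (x : L), pmap (t • x) = t ^ p • pmap x
  pmap_add_of_comm : ∀ x y : L, ⁅x, y⁆ = 0 → pmap (x + y) = pmap x + pmap y
  pmap_add_mem : ∀ x y : L, pmap (x + y) - pmap x - pmap y ∈ LieSubalgebra.lieSpan k L {x, y}
  ad_pmap : ∀ x y : L, ⁅pmap x, y⁆ = ((LieAlgebra.ad k L x) ^ p) y

variable {p k L}

/-- The (restricted) nullcone `V(g) = {x | x^[p] = 0}`. -/
def pStructure.null (P : pStructure p k L) : Set L := {x | P.pmap x = 0}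

/-- A submodule is an elementary abelian subalgebra if it is abelian (hence a subalgebra) and
the `p`-map vanishes on it. -/
def pStructure.IsElemAbelian (P : pStructure p k L) (e : Submodule k L) : Prop :=
  (∀ x ∈ e, ∀ y ∈ e, ⁅x, y⁆ = (0 : L)) ∧ ∀ x ∈ e, P.pmap x = 0

/-- `E(r, g)`: the `r`-dimensional elementary abelian subalgebras contained in the carrier
set `g` (take `g = Set.univ` for the whole algebra), as a set of submodules. -/
def pStructure.elemSet (P : pStructure p k L) (g : Set L) (r : ℕ) : Set (Submodule k L) :=
  {e | (e : Set L) ⊆ g ∧ Module.finrank k ↥e = r ∧ P.IsElemAbelian e}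

/-- Pairs of linearly independent vectors spanning a member of a given collection `C` of
two-dimensional subspaces. -/
def planePairs (C : Set (Submodule k L)) : Set (L × L) :=
  {z | LinearIndependent k ![z.1, z.2] ∧ Submodule.span k (Set.range ![z.1, z.2]) ∈ C}

/-- The canonical (quotient) map from spanning pairs to planes. -/
def planeMk (C : Set (Submodule k L)) (z : planePairs C) : ↥C :=
  ⟨Submodule.span k (Set.range ![z.val.1, z.val.2]), z.prop.2⟩

/-- The Zariski topology on a collection of two-dimensional subspaces (e.g. `E(2,g)` or
`Gr₂(g)^{V(g)}`), defined as the quotient topology induced from the Zariski topology on the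
variety of spanning pairs. -/
def planeTop (C : Set (Submodule k L)) : TopologicalSpace ↥C :=
  TopologicalSpace.coinduced (planeMk C)
    (TopologicalSpace.induced Subtype.val (zar k (L × L)))

/-- The statement that the projective variety `E(2, g)` is connected (the empty space counts
as connected). -/
def pStructure.EIsConnected (P : pStructure p k L) (g : Set L) : Prop :=
  @IsPreconnected ↥(P.elemSet g 2) (planeTop (P.elemSet g 2)) Set.univ

/-- `N_i(g) = {x | (ad x)^i = 0}`. -/
def Ncal (i : ℕ) : Set L := {x | (LieAlgebra.ad k L x) ^ i = 0}

/-- The truncated exponential `exp x = ∑_{i<p} (ad x)^i / i!`. -/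
def expAd (x : L) : Module.End k L :=
  ∑ i ∈ Finset.range p, (i.factorial : k)⁻¹ • ((LieAlgebra.ad k L x) ^ i)

/-- Automorphisms of the Lie algebra `L` (as linear endomorphisms). -/
def IsLieAut (f : Module.End k L) : Prop :=
  Function.Bijective f ∧ ∀ x y : L, f ⁅x, y⁆ = ⁅f x, f y⁆

/-- Automorphisms of the restricted Lie algebra `(L, [p])`, i.e. automorphisms commuting with
the `p`-map (the group `Aut_p(g)`). -/
def pStructure.IspAut (P : pStructure p k L) (f : Module.End k L) : Prop :=
  IsLieAut f ∧ ∀ x : L, f (P.pmap x) = P.pmap (f x)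

/-- A restricted Lie algebra is admissible if `N₃(g) ⊆ V(g)` and `exp(N₃(g)) ⊆ Aut_p(g)`. -/
def pStructure.IsAdmissible (P : pStructure p k L) : Prop :=
  Ncal (k := k) 3 ⊆ P.null ∧ ∀ x ∈ Ncal (k := k) (L := L) 3, P.IspAut (expAd (p := p) x)


section Rep

variable (P : pStructure p k L) (M : Type) [AddCommGroup M] [Module k M]

/-- A module over the restricted enveloping algebra `U₀(g)`, given as a representation of the
restricted Lie algebra: brackets go to commutators of operators and the `p`-map goes to the
`p`-th power of operators. -/
structure RestRep : Type where
  ρ : L →ₗ[k] Module.End k M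
  map_bracket : ∀ x y : L, ρ ⁅x, y⁆ = ρ x * ρ y - ρ y * ρ x
  map_pmap : ∀ x : L, ρ (P.pmap x) = (ρ x) ^ p

variable {P M}

/-- `M` has constant `j`-rank `r`:  all operators `x_M^j`, for `x ∈ V(g)∖{0}`, have rank `r`. -/
def RestRep.HasConstRank (R : RestRep P M) (j r : ℕ) : Prop :=
  ∀ x ∈ P.null, x ≠ 0 → Module.finrank k ↥(LinearMap.range ((R.ρ x) ^ j)) = r

/-- The radical series `Rad^s(M) = J^s·M` of `M` over `U₀(g)` for `g` unipotent
(e.g. elementary abelian), where `J` is the ideal generated by the action of `g`. -/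
def RestRep.radPow (R : RestRep P M) : ℕ → Submodule k M
  | 0 => ⊤
  | s + 1 => ⨆ x : L, Submodule.map (R.ρ x) (R.radPow s)

/-- The Loewy length of `M`. -/
noncomputable def RestRep.loewy (R : RestRep P M) : ℕ := sInf {s | R.radPow s = ⊥}

end Rep

section Jordan

variable {V : Type} [AddCommGroup V] [Module k V]

/-- The multiplicity of the Jordan block `[i]` in the Jordan type of a (nilpotent)
endomorphism `f`. -/
noncomputable def jordanMult (f : Module.End k V) (i : ℕ) : ℕ :=
  Module.finrank k ↥(LinearMap.ker f ⊓ LinearMap.range (f ^ (i - 1))) -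
  Module.finrank k ↥(LinearMap.ker f ⊓ LinearMap.range (f ^ i))

end Jordan
end ElemAb

open ElemAb

namespace ElemAb

section Operators

variable {k : Type} [Field k] {M : Type} [AddCommGroup M] [Module k M]

/-- If the values of a polynomial function over an infinite field lie in a submodule, then so do
its coefficients. -/
theorem coeff_mem_of_forall_sum_smul_mem [Infinite k] (W : Submodule k M) (n : ℕ) (c : ℕ → M)
    (h : ∀ t : k, ∑ i ∈ Finset.range n, t ^ i • c i ∈ W) (i : ℕ) (hi : i < n) : c i ∈ W := by
  rw [← Submodule.Quotient.mk_eq_zero W, ← Module.forall_dual_apply_eq_zero_iff k]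
  intro φ
  set a : ℕ → k := fun i => φ (W.mkQ (c i))
  have hq : (∑ i ∈ Finset.range n, Polynomial.C (a i) * Polynomial.X ^ i) = 0 := by
    refine Polynomial.funext fun t => ?_
    have h0 : φ (W.mkQ (∑ i ∈ Finset.range n, t ^ i • c i)) = 0 := by
      rw [Submodule.mkQ_apply, (Submodule.Quotient.mk_eq_zero W).2 (h t), map_zero]
    simp only [map_sum, map_smul, smul_eq_mul] at h0
    rw [Polynomial.eval_finsetSum, Polynomial.eval_zero, ← h0]
    refine Finset.sum_congr rfl fun i _ => ?_
    rw [Polynomial.eval_C_mul, Polynomial.eval_pow, Polynomial.eval_X, mul_comm]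
  have hi0 : a i = 0 := by
    simpa [Polynomial.finsetSum_coeff, Polynomial.coeff_C_mul, Polynomial.coeff_X_pow, hi]
      using congrArg (fun q => Polynomial.coeff q i) hq
  exact hi0

/-- The expansion of `(X + t Y)^n` in powers of `t`, with a formula for the linear term when
`X` and `Y` have central commutator `Z`. -/
theorem exists_expansion_pow_add_smul {A : Type} [Ring A] [Algebra k A] {X Y Z : A}
    (hXY : X * Y = Y * X + Z) (hXZ : Commute X Z) (n : ℕ) :
    ∃ c : ℕ → A, (∀ t : k, (X + t • Y) ^ (n + 1) = ∑ i ∈ Finset.range (n + 2), t ^ i • c i) ∧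
      c (n + 2) = 0 ∧ c 0 = X ^ (n + 1) ∧
      2 * (X * c 1) = (2 * (n + 1) : ℕ) * (Y * X ^ (n + 1)) +
        ((n + 1) * (n + 2) : ℕ) * (X ^ n * Z) := by
  induction n with
  | zero =>
    refine ⟨fun i => if i = 0 then X else if i = 1 then Y else 0, fun t => ?_, ?_, ?_, ?_⟩
    · simp [Finset.sum_range_succ]
    · simp
    · simp
    · simp [hXY, mul_add]
  | succ n ih =>
    obtain ⟨c, hc, hc0, hcX, hc1⟩ := ih
    refine ⟨fun i => if i = n + 3 then 0 else
      X * c i + (if i = 0 then 0 else Y * c (i - 1)), fun t => ?_, ?_, ?_, ?_⟩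
    · have h1 : ∀ i ∈ Finset.range (n + 1 + 2), t ^ i • (if i = n + 3 then 0 else
          X * c i + (if i = 0 then 0 else Y * c (i - 1))) =
          X * (t ^ i • c i) + t ^ i • (if i = 0 then 0 else Y * c (i - 1)) := by
        intro i hi
        rw [if_neg (by have := Finset.mem_range.1 hi; omega), smul_add, mul_smul_comm]
      rw [Finset.sum_congr rfl h1, Finset.sum_add_distrib, ← Finset.mul_sum,
        Finset.sum_range_succ, hc0, smul_zero, add_zero,
        Finset.sum_range_succ' (fun i => t ^ i • (if i = 0 then 0 else Y * c (i - 1))),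
        pow_succ', hc t, add_mul, Finset.mul_sum _ _ (t • Y)]
      simp only [Finset.mul_sum, if_true, smul_zero, add_zero, Nat.succ_ne_zero, if_false,
        Nat.add_sub_cancel, smul_mul_assoc, mul_smul_comm, smul_smul, pow_succ]
    · simp
    · simp [hcX, pow_succ']
    · have e : 2 * (X * (X * c 1 + Y * c 0)) = X * (2 * (X * c 1)) + 2 * (X * Y * c 0) := by
        noncomm_ring
      have e2 : X * Y * X ^ (n + 1) = Y * X ^ (n + 2) + X ^ (n + 1) * Z := by
        rw [hXY, add_mul, mul_assoc, ← pow_succ', (hXZ.pow_left (n + 1)).eq]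
      have e3 : X * (Y * X ^ (n + 1)) = Y * X ^ (n + 2) + X ^ (n + 1) * Z := by
        rw [← mul_assoc, e2]
      have e4 : X * (X ^ n * Z) = X ^ (n + 1) * Z := by rw [← mul_assoc, ← pow_succ']
      have hne : ¬ (1 = n + 3) := by omega
      simp only [hne, if_false, one_ne_zero, Nat.sub_self]
      rw [e, hc1, hcX, e2, mul_add, ← (Nat.cast_commute _ X).left_comm,
        ← (Nat.cast_commute _ X).left_comm, e3, e4]
      push_cast
      noncomm_ring

/-- A nilpotent operator contributes nothing to a generating set of `W`. -/
theorem le_of_le_map_sup_of_isNilpotent {f : Module.End k M} (hf : IsNilpotent f)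
    {W K : Submodule k M} (hK : K.map f ≤ K) (h : W ≤ W.map f ⊔ K) : W ≤ K := by
  have key : ∀ n : ℕ, W ≤ W.map (f ^ n) ⊔ K := by
    intro n
    induction n with
    | zero => exact le_sup_of_le_left (by simp [Module.End.one_eq_id])
    | succ n ih =>
      refine h.trans (sup_le ?_ le_sup_right)
      refine (Submodule.map_mono ih).trans ?_
      rw [Submodule.map_sup, ← Submodule.map_comp, ← Module.End.mul_eq_comp, ← pow_succ']
      exact sup_le_sup_left hK _
  obtain ⟨n, hn⟩ := hf
  simpa [hn] using key n

variable {p j : ℕ} {X Y Z : Module.End k M}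

theorem pow_mul_eq_of_central (hXY : X * Y = Y * X + Z) (hXZ : Commute X Z) (n : ℕ) :
    X ^ (n + 1) * Y = Y * X ^ (n + 1) + ((n + 1 : ℕ) : k) • (X ^ n * Z) := by
  induction n with
  | zero => simp [hXY]
  | succ n ih =>
    rw [pow_succ', mul_assoc, ih, mul_add, ← mul_assoc X Y, hXY, add_mul, mul_assoc Y,
      ← (hXZ.pow_left (n + 1)).eq, mul_smul_comm, ← mul_assoc X, ← pow_succ', ← pow_succ',
      add_assoc]
    congr 1
    rw [Nat.cast_succ (n + 1), add_smul, one_smul, add_comm]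

/-- If `X^(n+1) B` takes values in a `Y`-stable submodule, where `B` commutes with `Y`, then so
does `X^n Z B`. -/
theorem pow_mul_central_apply_mem [CharP k p] (hXY : X * Y = Y * X + Z)
    (hXZ : Commute X Z) {n : ℕ} (hn : n + 1 < p) {N : Submodule k M}
    (hN : ∀ m ∈ N, Y m ∈ N) {B : Module.End k M} (hB : Commute Y B)
    (h : ∀ m, (X ^ (n + 1) * B) m ∈ N) (m : M) : (X ^ n * (Z * B)) m ∈ N := by
  have hne : ((n + 1 : ℕ) : k) ≠ 0 := by
    rw [Ne, CharP.cast_eq_zero_iff k p]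
    exact Nat.not_dvd_of_pos_of_lt n.succ_pos hn
  have e : ((n + 1 : ℕ) : k) • (X ^ n * (Z * B)) =
      X ^ (n + 1) * B * Y - Y * (X ^ (n + 1) * B) := by
    rw [mul_assoc (X ^ (n + 1)), ← hB.eq, ← mul_assoc (X ^ (n + 1)), pow_mul_eq_of_central hXY hXZ, add_mul, mul_assoc Y,
      add_sub_cancel_left, smul_mul_assoc, mul_assoc]
  rw [← Submodule.smul_mem_iff N hne, ← LinearMap.smul_apply, e]
  exact N.sub_mem (h _) (hN _ (h m))

/-- The representation-theoretic core: operators generating a nilpotent representation of the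
Heisenberg algebra such that the `j`-th powers of `Y` and of all `X + t Y` have image in the
image of `Z^j`. -/
theorem central_pow_eq_zero_of_range_le [Infinite k] (hp : p.Prime) [CharP k p] (hj1 : 1 ≤ j)
    (hjp : j < p) (hXY : X * Y = Y * X + Z) (hXZ : Commute X Z) (hYZ : Commute Y Z)
    (hX : IsNilpotent X) (hY : IsNilpotent Y) (hZ : IsNilpotent Z)
    (hYr : LinearMap.range (Y ^ j) ≤ LinearMap.range (Z ^ j))
    (hr : ∀ t : k, LinearMap.range ((X + t • Y) ^ j) ≤ LinearMap.range (Z ^ j)) :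
    Z ^ j = 0 := by
  set W := LinearMap.range (Z ^ j) with hW
  have stab : ∀ f : Module.End k M, Commute f Z → ∀ m ∈ W, f m ∈ W := by
    rintro f hf _ ⟨m, rfl⟩
    exact ⟨f m, by rw [← Module.End.mul_apply, ← (hf.pow_right j).eq, Module.End.mul_apply]⟩
  have hXW := stab X hXZ
  have hYW := stab Y hYZ
  have hZW := stab Z (Commute.refl Z)
  set K := W.map Y ⊔ W.map Z with hK
  set N := W.map X ⊔ K with hN
  have XN : ∀ m ∈ W, X m ∈ N := fun m hm =>
    Submodule.mem_sup_left (Submodule.mem_map_of_mem hm)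
  have YK : ∀ m ∈ W, Y m ∈ K := fun m hm =>
    Submodule.mem_sup_left (Submodule.mem_map_of_mem hm)
  have ZK : ∀ m ∈ W, Z m ∈ K := fun m hm =>
    Submodule.mem_sup_right (Submodule.mem_map_of_mem hm)
  have YN : ∀ m ∈ W, Y m ∈ N := fun m hm => Submodule.mem_sup_right (YK m hm)
  have hKW : K ≤ W := sup_le (Submodule.map_le_iff_le_comap.2 hYW)
    (Submodule.map_le_iff_le_comap.2 hZW)
  have hNW : N ≤ W := sup_le (Submodule.map_le_iff_le_comap.2 hXW) hKW
  have hXYm : ∀ m, X (Y m) = Y (X m) + Z m := fun m => by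
    simpa using LinearMap.congr_fun hXY m
  have hXK : K.map X ≤ K := by
    rw [hK, Submodule.map_sup]
    refine sup_le ?_ ?_ <;> rintro _ ⟨_, ⟨w, hw, rfl⟩, rfl⟩
    · rw [hXYm]
      exact K.add_mem (YK _ (hXW w hw)) (ZK w hw)
    · rw [← Module.End.mul_apply, hXZ.eq]
      exact ZK _ (hXW w hw)
  have main : W ≤ N := by
    suffices h : ∀ m, (Z ^ j) m ∈ N by
      rintro _ ⟨m, rfl⟩
      exact h m
    obtain ⟨j, rfl⟩ := Nat.exists_eq_succ_of_ne_zero (Nat.one_le_iff_ne_zero.1 hj1)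
    have hXr : ∀ t : k, ∀ m, ((X + t • Y) ^ (j + 1)) m ∈ W := fun t m => hr t ⟨m, rfl⟩
    rcases j with _ | n
    · intro m
      have h1 : Y m ∈ W := hYr ⟨m, by simp⟩
      have h2 : X m ∈ W := by simpa using hXr 0 m
      have e : Z m = X (Y m) - Y (X m) := by rw [hXYm]; simp
      simpa [e] using N.sub_mem (XN _ h1) (YN _ h2)
    · have hvZ : ∀ t : k, ∀ m, ((X + t • Y) ^ (n + 1) * Z) m ∈ W := by
        intro t m
        have hv : (X + t • Y) * Y = Y * (X + t • Y) + Z := by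
          rw [add_mul, mul_add, hXY, smul_mul_assoc, mul_smul_comm]
          abel
        have := pow_mul_central_apply_mem (B := 1) hv (hXZ.add_left (hYZ.smul_left t))
          hjp hYW (Commute.one_right _) (fun m => by simpa using hXr t m) m
        simpa using this
      obtain ⟨c, hc, -, hc0, hc1⟩ := exists_expansion_pow_add_smul (k := k) hXY hXZ n
      have hcW : ∀ m, ∀ i < n + 2, (c i * Z) m ∈ W := by
        intro m i hi
        refine coeff_mem_of_forall_sum_smul_mem W (n + 2) (fun i => (c i * Z) m) ?_ i hi
        intro t
        have := hvZ t m
        rw [hc t, Finset.sum_mul, LinearMap.sum_apply] at this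
        simpa using this
      have base : ∀ m, (X ^ n * Z ^ 2) m ∈ N := by
        intro m
        have hne : (((n + 1) * (n + 2) : ℕ) : k) ≠ 0 := by
          rw [Ne, CharP.cast_eq_zero_iff k p, hp.dvd_mul, not_or]
          exact ⟨Nat.not_dvd_of_pos_of_lt (by omega) (by omega),
            Nat.not_dvd_of_pos_of_lt (by omega) hjp⟩
        have e : ((((n + 1) * (n + 2) : ℕ) : k)) • (X ^ n * Z ^ 2) =
            (2 : k) • (X * (c 1 * Z)) - ((2 * (n + 1) : ℕ) : k) • (Y * (c 0 * Z)) := by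
          have := congrArg (· * Z) hc1
          simp only [add_mul (_ * _) (_ * _) Z, mul_assoc, ← hc0] at this
          rw [eq_sub_iff_add_eq', ofNat_smul_eq_nsmul k, Nat.cast_smul_eq_nsmul,
            Nat.cast_smul_eq_nsmul, nsmul_eq_mul, nsmul_eq_mul, nsmul_eq_mul, sq, ← this]
          simp
        rw [← Submodule.smul_mem_iff N hne, ← LinearMap.smul_apply, e]
        exact N.sub_mem (N.smul_mem _ (XN _ (hcW m 1 (by omega))))
          (N.smul_mem _ (YN _ (hcW m 0 (by omega))))
      have descend : ∀ i ≤ n, ∀ m, (X ^ (n - i) * Z ^ (2 + i)) m ∈ N := by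
        intro i
        induction i with
        | zero => intro _; simpa using base
        | succ i ih =>
          intro hi m
          have hYN : ∀ m ∈ N, Y m ∈ N := fun m hm => YN _ (hNW hm)
          have := pow_mul_central_apply_mem (n := n - (i + 1)) hXY hXZ (by omega) hYN
            (hYZ.pow_right (2 + i)) (by
              have := ih (by omega)
              rwa [show n - i = n - (i + 1) + 1 by omega] at this) m
          rwa [← pow_succ'] at this
      intro m
      have := descend n le_rfl m
      rwa [Nat.sub_self, pow_zero, one_mul, add_comm] at this
  have hWK : W ≤ K := le_of_le_map_sup_of_isNilpotent hX hXK main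
  have hWZ : W ≤ W.map Z := by
    refine le_of_le_map_sup_of_isNilpotent hY ?_ hWK
    rintro _ ⟨_, ⟨w, hw, rfl⟩, rfl⟩
    exact ⟨Y w, hYW w hw, by rw [← Module.End.mul_apply, ← hYZ.eq, Module.End.mul_apply]⟩
  have hW0 : W ≤ ⊥ := le_of_le_map_sup_of_isNilpotent hZ (by simp) (by simpa using hWZ)
  exact LinearMap.range_eq_bot.1 (le_bot_iff.1 hW0)

end Operators

/-- A nilpotent non-abelian Lie algebra contains a Heisenberg triple. -/
theorem exists_lie_ne_zero_central (k : Type) [Field k] (u : Type) [LieRing u] [LieAlgebra k u]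
    [LieRing.IsNilpotent u] (hu : ¬ ∀ x y : u, ⁅x, y⁆ = 0) :
    ∃ x y : u, ⁅x, y⁆ ≠ 0 ∧ ∀ w : u, ⁅w, ⁅x, y⁆⁆ = 0 := by
  have hnil : ∃ n, LieModule.lowerCentralSeries k u u n = ⊥ :=
    LieModule.IsNilpotent.nilpotent k u u
  classical
  obtain ⟨n, hn, hmin⟩ : ∃ n, LieModule.lowerCentralSeries k u u n = ⊥ ∧
      ∀ m < n, LieModule.lowerCentralSeries k u u m ≠ ⊥ :=
    ⟨Nat.find hnil, Nat.find_spec hnil, fun m hm => Nat.find_min hnil hm⟩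
  have step : ∀ (i : ℕ) (x y : u), y ∈ LieModule.lowerCentralSeries k u u i →
      ⁅x, y⁆ ∈ LieModule.lowerCentralSeries k u u (i + 1) := fun i x y hy => by
    rw [LieModule.lowerCentralSeries_succ]
    exact LieSubmodule.lie_mem_lie (LieSubmodule.mem_top x) hy
  match n, hn, hmin with
  | 0, hn, _ =>
    refine absurd (fun x y => ?_) hu
    have : ⁅x, y⁆ ∈ LieModule.lowerCentralSeries k u u 0 := by simp
    simpa [hn] using this
  | 1, hn, _ =>
    refine absurd (fun x y => ?_) hu
    have := step 0 x y (by simp)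
    rw [zero_add, hn] at this
    simpa using this
  | n + 2, hn, hmin =>
    by_contra! hcon
    refine hmin (n + 1) (by omega) ?_
    rw [LieModule.lowerCentralSeries_succ, LieSubmodule.lie_eq_bot_iff]
    intro x _ y hy
    by_contra hxy
    obtain ⟨w, hw⟩ := hcon x y hxy
    have := step (n + 1) w _ (step n x y hy)
    rw [hn] at this
    exact hw (by simpa using this)

end ElemAb

/-- If `M` is a `U₀(g)`-module with the equal `j`-images property and `g`
contains a non-abelian `p`-trivial subalgebra, then `rk^j(M) = 0`, i.e. `x_M^j = 0` for all
`x ∈ V(g)`. -/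
theorem statement19
    (p : ℕ) (hp : p.Prime) (hp3 : 3 ≤ p)
    (k : Type) [Field k] [IsAlgClosed k] [CharP k p]
    (L : Type) [LieRing L] [LieAlgebra k L] [FiniteDimensional k L]
    (P : pStructure p k L)
    (j : ℕ) (hj1 : 1 ≤ j) (hjp : j ≤ p - 1)
    (M : Type) [AddCommGroup M] [Module k M] [FiniteDimensional k M]
    (R : RestRep P M)
    -- `M` has constant `j`-rank …
    (r : ℕ) (hconst : R.HasConstRank j r)
    -- … and the equal `j`-images property
    (heqi : ∀ x ∈ P.null, ∀ y ∈ P.null, x ≠ 0 → y ≠ 0 →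
      LinearMap.range ((R.ρ x) ^ j) = LinearMap.range ((R.ρ y) ^ j))
    -- `g` contains a non-abelian `p`-trivial subalgebra
    (hu : ∃ u : LieSubalgebra k L, (∀ x ∈ u, P.pmap x = 0) ∧
      ¬ (∀ x ∈ u, ∀ y ∈ u, ⁅x, y⁆ = (0 : L))) :
    ∀ x ∈ P.null, (R.ρ x) ^ j = 0 := by
  obtain ⟨u, hu0, hnab⟩ := hu
  have : LieRing.IsNilpotent u := by
    rw [LieAlgebra.isNilpotent_iff_forall (R := k)]
    intro x
    refine ⟨p, LinearMap.ext fun y => Subtype.ext ?_⟩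
    have hpow : ∀ n : ℕ, ((((LieAlgebra.ad k u x) ^ n) y : u) : L) =
        ((LieAlgebra.ad k L x) ^ n) (y : L) := by
      intro n
      induction n with
      | zero => simp
      | succ n ih => simp [pow_succ', ih]
    rw [hpow p, ← P.ad_pmap, hu0 x x.2]
    simp
  obtain ⟨x, y, hne, hcen⟩ := exists_lie_ne_zero_central k u (fun h => hnab fun x hx y hy => by
    simpa using congrArg Subtype.val (h ⟨x, hx⟩ ⟨y, hy⟩))
  have hne' : ((⁅x, y⁆ : u) : L) ≠ 0 := fun h => hne (Subtype.ext h)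
  have hnil : ∀ w : u, R.ρ w ^ p = 0 := fun w => by
    rw [← R.map_pmap, hu0 w w.2, map_zero]
  have hcomm : ∀ w : u, Commute (R.ρ w) (R.ρ (⁅x, y⁆ : u)) := fun w => by
    have := R.map_bracket w (⁅x, y⁆ : u)
    rw [← LieSubalgebra.coe_bracket, hcen w, ZeroMemClass.coe_zero, map_zero] at this
    exact (sub_eq_zero.1 this.symm)
  have hrange : ∀ w : u, w ≠ 0 →
      LinearMap.range (R.ρ w ^ j) = LinearMap.range (R.ρ (⁅x, y⁆ : u) ^ j) := fun w hw =>
    heqi _ (hu0 w w.2) _ (hu0 _ (⁅x, y⁆ : u).2) (by simpa using hw) hne'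
  have : Infinite k := IsAlgClosed.instInfinite
  have hZ : R.ρ (⁅x, y⁆ : u) ^ j = 0 := by
    refine central_pow_eq_zero_of_range_le (X := R.ρ x) (Y := R.ρ y) hp hj1 (by omega) ?_
      (hcomm x) (hcomm y) ⟨p, hnil x⟩ ⟨p, hnil y⟩ ⟨p, hnil _⟩ ?_ fun t => ?_
    · rw [LieSubalgebra.coe_bracket, R.map_bracket]
      abel
    · refine (hrange y ?_).le
      rintro rfl
      simp at hne
    · have := hrange (x + t • y) (fun h => hne (by
        rw [eq_neg_of_add_eq_zero_left h]; simp))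
      simpa using this.le
  intro v hv
  by_cases hv0 : v = 0
  · rw [hv0, map_zero, zero_pow (by omega)]
  · rw [← LinearMap.range_eq_bot, heqi v hv _ (hu0 _ (⁅x, y⁆ : u).2) hv0 hne',
      hZ, LinearMap.range_zero]
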